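/- For a finite complex reflection group W with exponents e_1,...,e_ℓ (where the basic invariant degrees are e_i + 1), the number of reflections in W equals e_1 + ⋯ + e_ℓ. -/

import Mathlib

open MvPolynomial

/-- A reflection in `GL_ℓ(ℂ)`: a nonidentity element fixing a hyperplane pointwise,
equivalently `g - 1` has rank one. -/
def IsReflection3 {ℓ : ℕ} (g : Matrix.GeneralLinearGroup (Fin ℓ) ℂ) : Prop :=
  (g : Matrix (Fin ℓ) (Fin ℓ) ℂ) ≠ 1 ∧ ((g : Matrix (Fin ℓ) (Fin ℓ) ℂ) - 1).rank = 1

/-- The action of a matrix `g` on polynomials, by linear substitution of the variables. -/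
noncomputable def matAct3 {ℓ : ℕ} (g : Matrix (Fin ℓ) (Fin ℓ) ℂ) :
    MvPolynomial (Fin ℓ) ℂ →ₐ[ℂ] MvPolynomial (Fin ℓ) ℂ :=
  MvPolynomial.aeval fun i => ∑ j, MvPolynomial.C (g i j) * MvPolynomial.X j

/-- The subalgebra of `W`-invariant polynomials. -/
noncomputable def invariants3 {ℓ : ℕ} (W : Subgroup (Matrix.GeneralLinearGroup (Fin ℓ) ℂ)) :
    Subalgebra ℂ (MvPolynomial (Fin ℓ) ℂ) :=
  ⨅ g ∈ W, AlgHom.equalizer (matAct3 (g : Matrix (Fin ℓ) (Fin ℓ) ℂ)) (AlgHom.id ℂ _)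

/-! Let `W` be a finite subgroup of `GL(V)`, `dim V = ℓ`, whose invariants are the polynomials in
algebraically independent `fᵢ` of degrees `eᵢ + 1`. By Molien's formula,
`∑_{g ∈ W} 1 / det(1 - t g) = |W| ∏ᵢ 1 / (1 - t ^ (eᵢ + 1))`,
both sides being `|W|` times the Hilbert series of the invariants. Multiply by `(1 - t) ^ ℓ` and
compare the expansions at `t = 1` to first order, that is, substitute `t = 1 - ε` with `ε² = 0`.
On the left the identity contributes `1`, a reflection `g` contributes `ε / (1 - det g)`, and every
other element contributes `0`; on the right `(1 + ⋯ + t ^ eᵢ)⁻¹` becomes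
`(eᵢ + 1)⁻¹ (1 + (eᵢ / 2) ε)`. Comparing constant terms and then coefficients of `ε` gives
`∑ 1 / (1 - det g) = ∑ eᵢ / 2`, the first sum being over the reflections. Since
`1 / (1 - x) + 1 / (1 - x⁻¹) = 1`, pairing `g` with `g⁻¹` shows that the left-hand side is half the
number of reflections. -/

open scoped Polynomial PowerSeries DualNumber

section Exponents

variable {σ R : Type*} [Fintype σ] [CommRing R]

/-- The exponent vectors of weighted degree `n` for the weights `d`. The cutoff to the box `a ≤ n`
makes this a `Finset` by construction; it loses nothing when the weights are positive. -/
noncomputable def weightedExponents (d : σ → ℕ) (n : ℕ) : Finset (σ →₀ ℕ) := by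
  classical
  exact (Finset.Iic (Finsupp.equivFunOnFinite.symm fun _ => n)).filter
    fun a => Finsupp.weight d a = n

lemma mem_weightedExponents {d : σ → ℕ} (hd : ∀ i, d i ≠ 0) {n : ℕ} {a : σ →₀ ℕ} :
    a ∈ weightedExponents d n ↔ Finsupp.weight d a = n := by
  simp only [weightedExponents, Finset.mem_filter, Finset.mem_Iic, and_iff_right_iff_imp]
  rintro rfl i
  exact Finsupp.le_weight d (hd i) a

/-- The geometric series `∑ cᵏ X^(d k)`. -/
noncomputable def geomSeries (c : R) (d : ℕ) : R⟦X⟧ :=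
  PowerSeries.mk fun m => if d ∣ m then c ^ (m / d) else 0

lemma geomSeries_mul_one_sub (c : R) {d : ℕ} (hd : d ≠ 0) :
    geomSeries c d * (1 - PowerSeries.C c * PowerSeries.X ^ d) = 1 := by
  have h1 : geomSeries c d =
      PowerSeries.expand d hd (PowerSeries.rescale c (PowerSeries.mk 1)) := by
    ext m
    simp [geomSeries, PowerSeries.coeff_expand]
  have h2 : 1 - PowerSeries.C c * PowerSeries.X ^ d =
      PowerSeries.expand d hd (PowerSeries.rescale c (1 - PowerSeries.X)) := by
    simp [PowerSeries.rescale_X, PowerSeries.expand_C]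
  rw [h1, h2, ← map_mul, ← map_mul, PowerSeries.mk_one_mul_one_sub_eq_one, map_one, map_one]

lemma coeff_prod_geomSeries (c : σ → R) {d : σ → ℕ} (hd : ∀ i, d i ≠ 0) (n : ℕ) :
    PowerSeries.coeff n (∏ i, geomSeries (c i) (d i)) =
      ∑ a ∈ weightedExponents d n, ∏ i, c i ^ a i := by
  classical
  rw [PowerSeries.coeff_prod]
  symm
  refine Finset.sum_of_injOn
    (fun a => Finsupp.equivFunOnFinite.symm fun i => d i * a i) ?_ ?_ ?_ ?_
  · intro a _ b _ hab
    ext i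
    simpa [hd i] using DFunLike.congr_fun hab i
  · intro a ha
    rw [Finset.mem_coe, mem_weightedExponents hd, Finsupp.weight_eq_sum] at ha
    simp [← ha, mul_comm]
  · intro l hl hl'
    obtain ⟨i, hi⟩ : ∃ i, ¬ d i ∣ l i := by
      by_contra! hdvd
      rw [Finset.mem_finsuppAntidiag] at hl
      refine hl' ⟨Finsupp.equivFunOnFinite.symm fun i => l i / d i, ?_, ?_⟩
      · rw [Finset.mem_coe, mem_weightedExponents hd, Finsupp.weight_eq_sum, ← hl.1]
        exact Finset.sum_congr rfl fun i _ => by simp [Nat.div_mul_cancel (hdvd i)]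
      · ext i
        simp [Nat.mul_div_cancel' (hdvd i)]
    exact Finset.prod_eq_zero (Finset.mem_univ i) (by simp [geomSeries, hi])
  · intro a _
    refine Finset.prod_congr rfl fun i _ => ?_
    simp [geomSeries, Nat.mul_div_cancel_left _ (Nat.pos_of_ne_zero (hd i))]

end Exponents

section HomogeneousGenerators

variable {σ ι R : Type*} [CommRing R] {f : ι → MvPolynomial σ R} {d : ι → ℕ}

lemma isHomogeneous_aeval_monomial [Finite ι] (hf : ∀ i, (f i).IsHomogeneous (d i))
    (a : ι →₀ ℕ) : (aeval f (monomial a (1 : R))).IsHomogeneous (Finsupp.weight d a) := by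
  have := Fintype.ofFinite ι
  rw [aeval_monomial, map_one, one_mul, Finsupp.weight_eq_sum,
    Finsupp.prod_fintype _ _ fun _ => pow_zero _]
  refine IsHomogeneous.prod _ _ _ fun i _ => ?_
  simpa only [smul_eq_mul, mul_comm] using (hf i).pow (a i)

lemma linearIndependent_aeval_monomial (hf : AlgebraicIndependent R f) :
    LinearIndependent R fun a : ι →₀ ℕ => aeval f (monomial a (1 : R)) := by
  simpa only [Function.comp_def, coe_basisMonomials, AlgHom.toLinearMap_apply] using
    (basisMonomials ι R).linearIndependent.map' (aeval f).toLinearMap (LinearMap.ker_eq_bot.2 hf)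

variable [Fintype ι]

lemma span_aeval_monomial (hd : ∀ i, d i ≠ 0) (hf : ∀ i, (f i).IsHomogeneous (d i)) (n : ℕ) :
    Submodule.span R (Set.range fun a : weightedExponents d n => aeval f (monomial a.1 (1 : R))) =
      (Algebra.adjoin R (Set.range f)).toSubmodule ⊓ homogeneousSubmodule σ R n := by
  rw [Algebra.adjoin_range_eq_range_aeval]
  apply le_antisymm
  · rw [Submodule.span_le]
    rintro _ ⟨⟨a, ha⟩, rfl⟩
    rw [mem_weightedExponents hd] at ha
    exact ⟨⟨_, rfl⟩, ha ▸ isHomogeneous_aeval_monomial hf a⟩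
  · rintro _ ⟨⟨q, rfl⟩, hn : (aeval f q).IsHomogeneous n⟩
    change aeval f q ∈ _
    rw [← homogeneousComponent_eq_self hn, q.as_sum, map_sum, map_sum]
    refine Submodule.sum_mem _ fun a _ => ?_
    rw [← mul_one (coeff a q), ← smul_eq_mul, ← smul_monomial, map_smul, map_smul,
      homogeneousComponent_of_mem (isHomogeneous_aeval_monomial hf a)]
    refine Submodule.smul_mem _ _ ?_
    split_ifs with h
    · exact Submodule.subset_span ⟨⟨a, (mem_weightedExponents hd).2 h.symm⟩, rfl⟩
    · exact Submodule.zero_mem _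

/-- The Hilbert series of a graded subalgebra of a polynomial ring, with its integer coefficients
taken in the base ring, where it is compared with series of traces. -/
noncomputable def hilbertSeries (A : Subalgebra R (MvPolynomial σ R)) : R⟦X⟧ :=
  PowerSeries.mk fun n =>
    (Module.finrank R ↥(A.toSubmodule ⊓ homogeneousSubmodule σ R n) : R)

lemma hilbertSeries_adjoin [Nontrivial R] (hd : ∀ i, d i ≠ 0)
    (hf : ∀ i, (f i).IsHomogeneous (d i)) (hindep : AlgebraicIndependent R f) :
    hilbertSeries (Algebra.adjoin R (Set.range f)) = ∏ i, geomSeries 1 (d i) := by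
  ext n
  have hli : LinearIndependent R
      fun a : weightedExponents d n => aeval f (monomial a.1 (1 : R)) :=
    (linearIndependent_aeval_monomial hindep).comp _ Subtype.val_injective
  rw [hilbertSeries, PowerSeries.coeff_mk, ← span_aeval_monomial hd hf, coeff_prod_geomSeries _ hd,
    finrank_span_eq_card hli, Fintype.card_coe]
  simp

lemma hilbertSeries_adjoin_mul [Nontrivial R] (hd : ∀ i, d i ≠ 0)
    (hf : ∀ i, (f i).IsHomogeneous (d i)) (hindep : AlgebraicIndependent R f) :
    hilbertSeries (Algebra.adjoin R (Set.range f)) * ∏ i, (1 - PowerSeries.X ^ d i) = 1 := by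
  rw [hilbertSeries_adjoin hd hf hindep, ← Finset.prod_mul_distrib]
  refine Finset.prod_eq_one fun i _ => ?_
  simpa only [map_one, one_mul] using geomSeries_mul_one_sub (1 : R) (hd i)

end HomogeneousGenerators

section LinearSubst

variable {σ R S : Type*} [Fintype σ] [CommRing R] [CommRing S]

/-- The monomials of degree `n`, as a basis of the homogeneous polynomials of degree `n`. -/
noncomputable def homogeneousBasis (σ R : Type*) [Fintype σ] [CommRing R] (n : ℕ) :
    Module.Basis (weightedExponents (fun _ : σ => 1) n) R (homogeneousSubmodule σ R n) :=
  (Module.Basis.span ((linearIndependent_aeval_monomial (algebraicIndependent_X σ R)).comp _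
    Subtype.val_injective)).map (LinearEquiv.ofEq _ _ (by
      refine (span_aeval_monomial (fun _ => one_ne_zero) (isHomogeneous_X R) n).trans ?_
      rw [adjoin_range_X, Algebra.top_toSubmodule, top_inf_eq]))

lemma coe_homogeneousBasis (n : ℕ) (a : weightedExponents (fun _ : σ => 1) n) :
    (homogeneousBasis σ R n a : MvPolynomial σ R) = monomial a.1 1 := by
  rw [homogeneousBasis, Module.Basis.map_apply, LinearEquiv.coe_ofEq_apply,
    Module.Basis.span_apply]
  simp

lemma homogeneousBasis_repr (n : ℕ) (p : homogeneousSubmodule σ R n)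
    (a : weightedExponents (fun _ : σ => 1) n) :
    (homogeneousBasis σ R n).repr p a = coeff a.1 (p : MvPolynomial σ R) := by
  classical
  conv_rhs => rw [← (homogeneousBasis σ R n).sum_repr p]
  simp only [AddSubmonoidClass.coe_finsetSum, Submodule.coe_smul, coe_homogeneousBasis, coeff_sum,
    coeff_smul, coeff_monomial, smul_eq_mul, mul_ite, mul_one, mul_zero, ← Subtype.ext_iff,
    Finset.sum_ite_eq', Finset.mem_univ, if_true]

/-- Linear substitution of the variables: the action of a matrix on polynomials. -/
noncomputable def linearSubst (g : Matrix σ σ R) : MvPolynomial σ R →ₐ[R] MvPolynomial σ R :=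
  aeval fun i => ∑ j, C (g i j) * X j

lemma linearSubst_mul (g h : Matrix σ σ R) :
    linearSubst (g * h) = (linearSubst h).comp (linearSubst g) := by
  ext1 i
  simp only [linearSubst, AlgHom.comp_apply, aeval_X, map_sum, map_mul, algHom_C, algebraMap_eq,
    Matrix.mul_apply, Finset.mul_sum, Finset.sum_mul]
  rw [Finset.sum_comm]
  simp only [mul_assoc]

lemma linearSubst_one [DecidableEq σ] : linearSubst (1 : Matrix σ σ R) = AlgHom.id R _ := by
  ext1 i
  simp [linearSubst, Matrix.one_apply]

lemma map_linearSubst (φ : R →+* S) (g : Matrix σ σ R) (p : MvPolynomial σ R) :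
    map φ (linearSubst g p) = linearSubst (g.map φ) (map φ p) := by
  rw [linearSubst, map_aeval, linearSubst, aeval_def, eval₂_map, coe_eval₂Hom]
  congr 1
  · ext r
    simp
  · ext1 i
    simp

lemma linearSubst_diagonal_monomial [DecidableEq σ] (c : σ → R) (a : σ →₀ ℕ) :
    linearSubst (Matrix.diagonal c) (monomial a 1) = (∏ i, c i ^ a i) • monomial a 1 := by
  have hX (i : σ) : ∑ j, C (Matrix.diagonal c i j) * X j = (C (c i) * X i : MvPolynomial σ R) := by
    rw [Finset.sum_eq_single i] <;> simp +contextual [eq_comm]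
  rw [linearSubst, aeval_monomial, map_one, one_mul, Finsupp.prod_fintype _ _ fun _ => pow_zero _]
  simp only [hX, mul_pow, Finset.prod_mul_distrib]
  rw [monomial_eq, Finsupp.prod_fintype _ _ fun _ => pow_zero _, smul_eq_C_mul]
  simp

lemma isHomogeneous_linearSubst (g : Matrix σ σ R) {n : ℕ} {p : MvPolynomial σ R}
    (hp : p.IsHomogeneous n) : (linearSubst g p).IsHomogeneous n := by
  simpa only [one_mul, linearSubst] using
    IsHomogeneous.aeval (n := 1) hp (fun i => ∑ j, C (g i j) * X j) fun i =>
      IsHomogeneous.sum _ _ _ fun j _ => isHomogeneous_C_mul_X _ _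

/-- The action of a matrix on the homogeneous polynomials of degree `n`, that is, on the `n`-th
symmetric power of the space of linear forms. -/
noncomputable def homogeneousSubst (n : ℕ) (g : Matrix σ σ R) :
    Module.End R (homogeneousSubmodule σ R n) :=
  (linearSubst g).toLinearMap.restrict fun _ => isHomogeneous_linearSubst g

lemma coe_homogeneousSubst {n : ℕ} (g : Matrix σ σ R) (p : homogeneousSubmodule σ R n) :
    (homogeneousSubst n g p : MvPolynomial σ R) = linearSubst g p := rfl

lemma homogeneousSubst_mul (n : ℕ) (g h : Matrix σ σ R) :
    homogeneousSubst n (g * h) = homogeneousSubst n h * homogeneousSubst n g := by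
  ext1 p
  apply Subtype.ext
  simp only [Module.End.mul_apply, coe_homogeneousSubst, linearSubst_mul, AlgHom.comp_apply]

lemma homogeneousSubst_one [DecidableEq σ] (n : ℕ) :
    homogeneousSubst n (1 : Matrix σ σ R) = 1 := by
  ext1 p
  apply Subtype.ext
  simp only [coe_homogeneousSubst, linearSubst_one, AlgHom.id_apply, Module.End.one_apply]

/-- The generating series of the traces of a matrix on the homogeneous polynomials of each
degree. -/
noncomputable def traceSeries (g : Matrix σ σ R) : R⟦X⟧ :=
  PowerSeries.mk fun n => LinearMap.trace R (homogeneousSubmodule σ R n) (homogeneousSubst n g)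

lemma coeff_traceSeries (g : Matrix σ σ R) (n : ℕ) :
    PowerSeries.coeff n (traceSeries g) =
      ∑ a ∈ weightedExponents (fun _ : σ => 1) n, coeff a (linearSubst g (monomial a 1)) := by
  classical
  rw [traceSeries, PowerSeries.coeff_mk,
    LinearMap.trace_eq_matrix_trace R (homogeneousBasis σ R n), Matrix.trace,
    ← Finset.sum_coe_sort (weightedExponents _ n)]
  simp only [Matrix.diag_apply, LinearMap.toMatrix_apply, homogeneousBasis_repr,
    coe_homogeneousSubst, coe_homogeneousBasis]

lemma map_traceSeries (φ : R →+* S) (g : Matrix σ σ R) :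
    PowerSeries.map φ (traceSeries g) = traceSeries (g.map φ) := by
  ext n
  simp only [PowerSeries.coeff_map, coeff_traceSeries, map_sum, ← coeff_map, map_linearSubst,
    map_monomial, map_one]

lemma traceSeries_diagonal [DecidableEq σ] (c : σ → R) :
    traceSeries (Matrix.diagonal c) = ∏ i, geomSeries (c i) 1 := by
  ext n
  simp only [coeff_traceSeries, coeff_prod_geomSeries c fun _ => one_ne_zero,
    linearSubst_diagonal_monomial, coeff_smul, coeff_monomial, if_true, smul_eq_mul, mul_one]

lemma traceSeries_eq_of_isConj [DecidableEq σ] {g h : Matrix σ σ R} (hgh : IsConj g h) :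
    traceSeries g = traceSeries h := by
  obtain ⟨P, hP⟩ := hgh
  ext n
  simp only [traceSeries, PowerSeries.coeff_mk]
  have hg : g = (↑P⁻¹ : Matrix σ σ R) * h * P := by
    rw [mul_assoc, ← hP.eq, Units.inv_mul_cancel_left]
  rw [hg, homogeneousSubst_mul, LinearMap.trace_mul_comm, homogeneousSubst_mul, mul_assoc,
    ← homogeneousSubst_mul, P.mul_inv, homogeneousSubst_one, mul_one]

end LinearSubst

section ReversedCharpoly

variable {R : Type*} [CommRing R]

lemma eval_one_reverse (P : R[X]) : P.reverse.eval 1 = P.eval 1 := by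
  let := invertibleOne (α := R)
  simpa using Polynomial.eval₂_reverse_mul_pow (RingHom.id R) 1 P

lemma reverse_X_sub_one_pow [IsDomain R] (n : ℕ) :
    ((Polynomial.X - 1 : R[X]) ^ n).reverse = (1 - Polynomial.X) ^ n := by
  have h : (Polynomial.X - 1 : R[X]).reverse = 1 - Polynomial.X := by
    have hX : (Polynomial.X : R[X]).reverse = 1 := by
      rw [← one_mul Polynomial.X, Polynomial.reverse_mul_X, ← Polynomial.C_1, Polynomial.reverse_C]
    simpa [sub_eq_add_neg, hX] using Polynomial.reverse_add_C Polynomial.X (-1 : R)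
  induction n with
  | zero => simpa using Polynomial.reverse_C (1 : R)
  | succ n ih => rw [pow_succ, Polynomial.reverse_mul_of_domain, ih, h, pow_succ]

variable {σ : Type*} [Fintype σ] [DecidableEq σ]

lemma charpolyRev_eq_of_isConj {g h : Matrix σ σ R} (hgh : IsConj g h) :
    g.charpolyRev = h.charpolyRev := by
  obtain ⟨P, hP⟩ := hgh
  rw [← Matrix.reverse_charpoly, ← Matrix.reverse_charpoly, ← Matrix.charpoly_units_conj P g,
    hP.eq, Matrix.mul_assoc, ← Matrix.coe_units_inv, P.mul_inv, Matrix.mul_one]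

lemma charpolyRev_diagonal (c : σ → R) :
    (Matrix.diagonal c).charpolyRev = ∏ i, (1 - Polynomial.C (c i) * Polynomial.X) := by
  rw [Matrix.charpolyRev, Matrix.diagonal_map (map_zero _), ← Matrix.diagonal_smul,
    ← Matrix.diagonal_one, Matrix.diagonal_sub, Matrix.det_diagonal]
  simp only [Pi.smul_apply, smul_eq_mul, mul_comm]

lemma map_charpolyRev {S : Type*} [CommRing S] (φ : R →+* S) (g : Matrix σ σ R) :
    g.charpolyRev.map φ = (g.map φ).charpolyRev := by
  rw [Matrix.charpolyRev, Matrix.charpolyRev, ← Polynomial.coe_mapRingHom, RingHom.map_det]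
  congr 1
  ext1 i j
  simp [Matrix.one_apply, apply_ite]

end ReversedCharpoly

section FiniteOrder

variable {K : Type*} [Field K]

lemma isSemisimple_of_pow_eq_one {V : Type*} [AddCommGroup V] [Module K V] {T : Module.End K V}
    {m : ℕ} (hm : (m : K) ≠ 0) (hT : T ^ m = 1) : T.IsSemisimple := by
  refine Module.End.isSemisimple_of_squarefree_aeval_eq_zero
    (Polynomial.separable_X_pow_sub_C (1 : K) hm one_ne_zero).squarefree ?_
  simp [hT]

lemma exists_basis_eigenvectors [IsAlgClosed K] {V : Type*} [AddCommGroup V] [Module K V]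
    [FiniteDimensional K V] {T : Module.End K V} (hT : T.IsSemisimple) {ι : Type*}
    (b₀ : Module.Basis ι K V) :
    ∃ (b : Module.Basis ι K V) (c : ι → K), ∀ i, T (b i) = c i • b i := by
  have hspan : ⊤ ≤ Submodule.span K {v | ∃ μ : K, T v = μ • v} := by
    rw [← hT.iSup_eigenspace_eq_top, iSup_le_iff]
    exact fun μ v hv => Submodule.subset_span ⟨μ, Module.End.mem_eigenspace_iff.1 hv⟩
  obtain ⟨t, ht, htspan, hli⟩ := exists_linearIndependent K {v | ∃ μ : K, T v = μ • v}
  let b := Module.Basis.mk hli (by rwa [Subtype.range_coe, htspan])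
  let b' := b.reindex (b.indexEquiv b₀)
  have hb (i : ι) : ∃ μ : K, T (b' i) = μ • b' i := by
    simpa [b', b] using ht ((b.indexEquiv b₀).symm i).2
  choose c hc using hb
  exact ⟨b', c, hc⟩

variable {σ : Type*} [Fintype σ] [DecidableEq σ]

lemma isSemisimple_toLin'_of_pow_eq_one {g : Matrix σ σ K} {m : ℕ} (hm : (m : K) ≠ 0)
    (hg : g ^ m = 1) : Module.End.IsSemisimple (Matrix.toLin' g) :=
  isSemisimple_of_pow_eq_one hm (by rw [← Matrix.toLin'_pow, hg, Matrix.toLin'_one]; rfl)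

lemma exists_isConj_diagonal [IsAlgClosed K] {g : Matrix σ σ K}
    (hg : Module.End.IsSemisimple (Matrix.toLin' g)) : ∃ c, IsConj g (Matrix.diagonal c) := by
  obtain ⟨b, c, hc⟩ := exists_basis_eigenvectors hg (Pi.basisFun K σ)
  have hdiag : Matrix.diagonal c = LinearMap.toMatrix b b (Matrix.toLin' g) := by
    ext i j
    rw [LinearMap.toMatrix_apply, hc, Matrix.diagonal_apply, map_smul, b.repr_self,
      Finsupp.smul_single, smul_eq_mul, mul_one, Finsupp.single_apply]
    aesop
  let P : (Matrix σ σ K)ˣ :=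
    ⟨b.toMatrix (Pi.basisFun K σ), (Pi.basisFun K σ).toMatrix b,
      Module.Basis.toMatrix_mul_toMatrix_flip _ _, Module.Basis.toMatrix_mul_toMatrix_flip _ _⟩
  refine ⟨c, P, ?_⟩
  calc b.toMatrix (Pi.basisFun K σ) * g
    _ = b.toMatrix (Pi.basisFun K σ) *
        LinearMap.toMatrix (Pi.basisFun K σ) (Pi.basisFun K σ) (Matrix.toLin' g) := by
      rw [LinearMap.toMatrix_eq_toMatrix', LinearMap.toMatrix'_toLin']
    _ = Matrix.diagonal c * b.toMatrix (Pi.basisFun K σ) := by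
      rw [basis_toMatrix_mul_linearMap_toMatrix, hdiag, linearMap_toMatrix_mul_basis_toMatrix]

lemma traceSeries_mul_charpolyRev {g : Matrix σ σ K} {m : ℕ} (hm : (m : K) ≠ 0)
    (hg : g ^ m = 1) : traceSeries g * (g.charpolyRev : K⟦X⟧) = 1 := by
  let φ := algebraMap K (AlgebraicClosure K)
  have hφ : g.map φ ^ m = 1 := by
    rw [← RingHom.mapMatrix_apply, ← map_pow, hg, map_one]
  have hmφ : (m : AlgebraicClosure K) ≠ 0 := by
    simpa only [map_natCast, map_ne_zero] using (map_ne_zero φ).2 hm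
  obtain ⟨c, hc⟩ := exists_isConj_diagonal (isSemisimple_toLin'_of_pow_eq_one hmφ hφ)
  apply PowerSeries.map_injective φ φ.injective
  rw [map_mul, map_traceSeries, ← Polynomial.polynomial_map_coe, map_charpolyRev, map_one,
    traceSeries_eq_of_isConj hc, charpolyRev_eq_of_isConj hc, traceSeries_diagonal,
    charpolyRev_diagonal, ← Polynomial.coeToPowerSeries.ringHom_apply, map_prod,
    ← Finset.prod_mul_distrib]
  refine Finset.prod_eq_one fun i _ => ?_
  simpa using geomSeries_mul_one_sub (c i) one_ne_zero

lemma rank_sub_one_add_rootMultiplicity {g : Matrix σ σ K}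
    (hg : Module.End.IsSemisimple (Matrix.toLin' g)) :
    (g - 1).rank + g.charpoly.rootMultiplicity 1 = Fintype.card σ := by
  have hker : Module.finrank K (LinearMap.ker (g - 1).mulVecLin) =
      g.charpoly.rootMultiplicity 1 := by
    have hsub : (g - 1).mulVecLin = Matrix.toLin' g - (1 : K) • (1 : Module.End K (σ → K)) := by
      rw [one_smul, ← Matrix.toLin'_apply', map_sub, Matrix.toLin'_one, Module.End.one_eq_id]
    rw [hsub, ← Matrix.charpoly_toLin', ← LinearMap.finrank_maxGenEigenspace_eq,
      hg.isFinitelySemisimple.maxGenEigenspace_eq_eigenspace, Module.End.eigenspace_def]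
  rw [← hker, Matrix.rank, LinearMap.finrank_range_add_finrank_ker, Module.finrank_pi]

lemma exists_charpoly_eq {g : Matrix σ σ K} (hg : Module.End.IsSemisimple (Matrix.toLin' g)) :
    ∃ Q : K[X], g.charpoly = (Polynomial.X - 1) ^ g.charpoly.rootMultiplicity 1 * Q ∧
      Q.Monic ∧ Q.natDegree = (g - 1).rank ∧ Q.eval 1 ≠ 0 := by
  have hcard := rank_sub_one_add_rootMultiplicity hg
  obtain ⟨Q, hQ, hQ1⟩ := Polynomial.exists_eq_pow_rootMultiplicity_mul_and_not_dvd g.charpoly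
    g.charpoly_monic.ne_zero 1
  have hpow : ((Polynomial.X - Polynomial.C 1 : K[X]) ^ g.charpoly.rootMultiplicity 1).Monic :=
    (Polynomial.monic_X_sub_C 1).pow _
  have hQmonic : Q.Monic := hpow.of_mul_monic_left (hQ ▸ g.charpoly_monic)
  refine ⟨Q, by rwa [Polynomial.C_1] at hQ, hQmonic, ?_, by rwa [Polynomial.dvd_iff_isRoot] at hQ1⟩
  have hdeg := g.charpoly_natDegree_eq_dim
  rw [hQ, hpow.natDegree_mul hQmonic, Polynomial.natDegree_pow,
    Polynomial.natDegree_X_sub_C] at hdeg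
  lia

lemma exists_charpolyRev_eq {g : Matrix σ σ K} (hg : Module.End.IsSemisimple (Matrix.toLin' g)) :
    ∃ P : K[X], (1 - Polynomial.X) ^ (g - 1).rank * g.charpolyRev =
      (1 - Polynomial.X) ^ Fintype.card σ * P ∧ P.eval 1 ≠ 0 ∧
        ((g - 1).rank = 0 → P = 1) ∧ ((g - 1).rank = 1 → P.eval 1 = 1 - g.det) := by
  have hcard := rank_sub_one_add_rootMultiplicity hg
  obtain ⟨Q, hQ, hQmonic, hQdeg, hQ1⟩ := exists_charpoly_eq hg
  refine ⟨Q.reverse, ?_, by rwa [eval_one_reverse], fun hr => ?_, fun hr => ?_⟩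
  · rw [← Matrix.reverse_charpoly, hQ, Polynomial.reverse_mul_of_domain, reverse_X_sub_one_pow,
      ← mul_assoc, ← pow_add, hcard]
  · rw [hQmonic.natDegree_eq_zero.1 (hQdeg.trans hr), ← Polynomial.C_1, Polynomial.reverse_C]
  · rw [eval_one_reverse, hQmonic.eq_X_add_C (hQdeg.trans hr), g.det_eq_sign_charpoly_coeff, hQ,
      ← hcard, hr]
    simp only [Polynomial.coeff_zero_eq_eval_zero, Polynomial.eval_add, Polynomial.eval_X,
      Polynomial.eval_C, Polynomial.eval_mul, Polynomial.eval_pow, Polynomial.eval_sub,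
      Polynomial.eval_one, zero_sub]
    rw [← mul_assoc, ← pow_add, add_assoc, pow_add, Even.neg_one_pow (Even.add_self _)]
    ring

lemma exists_traceSeries_mul_eq {g : Matrix σ σ K} {m : ℕ} (hm : (m : K) ≠ 0) (hg : g ^ m = 1) :
    ∃ P : K[X], (1 - PowerSeries.X) ^ Fintype.card σ * traceSeries g * (P : K⟦X⟧) =
        (1 - PowerSeries.X) ^ (g - 1).rank ∧ P.eval 1 ≠ 0 ∧
      ((g - 1).rank = 0 → P = 1) ∧ ((g - 1).rank = 1 → P.eval 1 = 1 - g.det) := by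
  obtain ⟨P, hP, hP'⟩ := exists_charpolyRev_eq (isSemisimple_toLin'_of_pow_eq_one hm hg)
  refine ⟨P, ?_, hP'⟩
  have hP : (1 - PowerSeries.X) ^ (g - 1).rank * (g.charpolyRev : K⟦X⟧) =
      (1 - PowerSeries.X) ^ Fintype.card σ * (P : K⟦X⟧) := by
    simpa using congrArg (Polynomial.coeToPowerSeries.ringHom (R := K)) hP
  calc (1 - PowerSeries.X) ^ Fintype.card σ * traceSeries g * (P : K⟦X⟧)
    _ = traceSeries g * ((1 - PowerSeries.X) ^ Fintype.card σ * (P : K⟦X⟧)) := by ring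
    _ = (1 - PowerSeries.X) ^ (g - 1).rank * (traceSeries g * (g.charpolyRev : K⟦X⟧)) := by
      rw [← hP]
      ring
    _ = (1 - PowerSeries.X) ^ (g - 1).rank := by rw [traceSeries_mul_charpolyRev hm hg, mul_one]

end FiniteOrder

section Reflection

variable {σ K : Type*} [Fintype σ] [DecidableEq σ] [Field K]

/-- A reflection: a nonidentity element `g` fixing a hyperplane pointwise, encoded as `g - 1` having
rank one. -/
def IsReflection (g : Matrix.GeneralLinearGroup σ K) : Prop :=
  ((g : Matrix σ σ K) - 1).rank = 1

lemma not_isReflection_one : ¬ IsReflection (1 : Matrix.GeneralLinearGroup σ K) := by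
  rw [IsReflection, Units.val_one, sub_self, Matrix.rank_zero]
  exact zero_ne_one

lemma two_le_rank_sub_one {g : Matrix.GeneralLinearGroup σ K} (h1 : g ≠ 1)
    (hr : ¬ IsReflection g) : 2 ≤ (g.1 - 1).rank := by
  have h0 : (g.1 - 1).rank ≠ 0 := by
    rw [Ne, Matrix.rank, Submodule.finrank_eq_zero, LinearMap.range_eq_bot,
      ← Matrix.toLin'_apply', LinearEquiv.map_eq_zero_iff, sub_eq_zero]
    exact fun h => h1 (Units.ext h)
  rw [IsReflection] at hr
  lia

lemma isReflection3_iff {ℓ : ℕ} {g : Matrix.GeneralLinearGroup (Fin ℓ) ℂ} :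
    IsReflection3 g ↔ IsReflection g :=
  and_iff_right_of_imp fun hr h1 => by
    obtain rfl : g = 1 := Units.ext h1
    exact not_isReflection_one hr

lemma IsReflection.inv {g : Matrix.GeneralLinearGroup σ K} (hg : IsReflection g) :
    IsReflection g⁻¹ := by
  have h : (g⁻¹).1 - 1 = (-g⁻¹).1 * (g.1 - 1) := by
    rw [mul_sub, ← Units.val_mul, neg_mul, inv_mul_cancel, Units.val_neg, Units.val_neg,
      Units.val_one, mul_one, sub_neg_eq_add, add_comm, sub_eq_add_neg]
  rwa [IsReflection, h, Matrix.rank_mul_eq_right_of_isUnit_det _ _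
    ((Matrix.isUnit_iff_isUnit_det _).1 (-g⁻¹).isUnit)]

lemma isReflection_inv_iff {g : Matrix.GeneralLinearGroup σ K} :
    IsReflection g⁻¹ ↔ IsReflection g :=
  ⟨fun h => inv_inv g ▸ h.inv, IsReflection.inv⟩

lemma IsReflection.det_ne_one {g : Matrix.GeneralLinearGroup σ K} (hg : IsReflection g) {m : ℕ}
    (hm : (m : K) ≠ 0) (hgm : g ^ m = 1) : g.1.det ≠ 1 := by
  obtain ⟨P, -, hP1, -, hP⟩ := exists_traceSeries_mul_eq (g := g.1) hm
    (by rw [← Units.val_pow_eq_pow_val, hgm, Units.val_one])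
  rw [hP hg, sub_ne_zero] at hP1
  exact hP1.symm

end Reflection

section Molien

variable {σ R : Type*} [Fintype σ] [DecidableEq σ] [CommRing R]

/-- The subalgebra of polynomials invariant under a group of linear substitutions. -/
noncomputable def invariantSubalgebra (W : Subgroup (Matrix.GeneralLinearGroup σ R)) :
    Subalgebra R (MvPolynomial σ R) :=
  ⨅ g ∈ W, AlgHom.equalizer (linearSubst (g : Matrix σ σ R)) (AlgHom.id R _)

lemma mem_invariantSubalgebra {W : Subgroup (Matrix.GeneralLinearGroup σ R)}
    {p : MvPolynomial σ R} :
    p ∈ invariantSubalgebra W ↔ ∀ g ∈ W, linearSubst (g : Matrix σ σ R) p = p := by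
  simp only [invariantSubalgebra, Algebra.mem_iInf, AlgHom.mem_equalizer, AlgHom.id_apply]

/-- The representation of `W` on the homogeneous polynomials of degree `n`. Substitution is a right
action, hence the inverse. -/
noncomputable def homogeneousRep (W : Subgroup (Matrix.GeneralLinearGroup σ R)) (n : ℕ) :
    Representation R W (homogeneousSubmodule σ R n) where
  toFun g := homogeneousSubst n ((g⁻¹ : W) : Matrix.GeneralLinearGroup σ R).1
  map_one' := by
    rw [inv_one, Subgroup.coe_one, Units.val_one, homogeneousSubst_one]
  map_mul' g h := by
    rw [mul_inv_rev, Subgroup.coe_mul, Units.val_mul, homogeneousSubst_mul]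

lemma map_invariants_homogeneousRep (W : Subgroup (Matrix.GeneralLinearGroup σ R)) (n : ℕ) :
    (homogeneousRep W n).invariants.map (homogeneousSubmodule σ R n).subtype =
      (invariantSubalgebra W).toSubmodule ⊓ homogeneousSubmodule σ R n := by
  ext p
  simp only [Submodule.mem_map, Submodule.mem_inf, Subalgebra.mem_toSubmodule,
    mem_invariantSubalgebra, Representation.mem_invariants]
  constructor
  · rintro ⟨q, hq, rfl⟩
    refine ⟨fun g hg => ?_, q.2⟩
    simpa [homogeneousRep, coe_homogeneousSubst] using congrArg Subtype.val (hq ⟨g, hg⟩⁻¹)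
  · rintro ⟨hp, hn⟩
    exact ⟨⟨p, hn⟩, fun g => Subtype.ext (hp _ (g⁻¹).2), rfl⟩

lemma sum_traceSeries_eq_card_mul_hilbertSeries {K : Type*} [Field K] [CharZero K]
    (W : Subgroup (Matrix.GeneralLinearGroup σ K)) [Fintype W] :
    ∑ g : W, traceSeries (g : Matrix.GeneralLinearGroup σ K).1 =
      Nat.card W * hilbertSeries (invariantSubalgebra W) := by
  have hW : (Nat.card W : K) ≠ 0 := Nat.cast_ne_zero.2 Nat.card_pos.ne'
  let := invertibleOfNonzero hW
  ext n
  have := Module.Finite.of_basis (homogeneousBasis σ K n)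
  have havg := Representation.card_inv_mul_sum_char_eq_finrank (homogeneousRep W n)
  rw [inv_mul_eq_iff_eq_mul₀ hW, ← Equiv.sum_comp (Equiv.inv W)] at havg
  rw [← nsmul_eq_mul, map_nsmul, nsmul_eq_mul, hilbertSeries, PowerSeries.coeff_mk,
    ← map_invariants_homogeneousRep, Submodule.finrank_map_subtype_eq, ← havg]
  simp [traceSeries, Representation.character, homogeneousRep]

end Molien

section Expansion

lemma sum_mul_map_prod {ι R B : Type*} [Fintype ι] [DecidableEq ι] [CommRing R] [CommRing B]
    (φ : R →+* B) {b : ι → B} {p q : ι → R} (hb : ∀ j, b j * φ (p j) = φ (q j)) :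
    (∑ j, b j) * φ (∏ j, p j) = φ (∑ j, q j * ∏ k ∈ Finset.univ.erase j, p k) := by
  rw [map_sum, Finset.sum_mul]
  refine Finset.sum_congr rfl fun j _ => ?_
  rw [← Finset.mul_prod_erase _ _ (Finset.mem_univ j), map_mul, map_mul, ← mul_assoc, hb]

/-- An identity between fractions `q j / p j` that holds in an extension `A` of `R` holds in every
`R`-algebra in which the denominators are invertible. -/
lemma map_mul_sum_eq_of_mul_map_eq {ι R A B : Type*} [Fintype ι] [CommRing R] [CommRing A]
    [CommRing B] {i : R →+* A} (hi : Function.Injective i) (φ : R →+* B) {a : ι → A} {b : ι → B}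
    {p q : ι → R} (ha : ∀ j, a j * i (p j) = i (q j)) (hb : ∀ j, b j * φ (p j) = φ (q j))
    (hp : ∀ j, IsUnit (φ (p j))) {r s : R} (h : i r * ∑ j, a j = i s) :
    φ r * ∑ j, b j = φ s := by
  classical
  have hr : r * ∑ j, q j * ∏ k ∈ Finset.univ.erase j, p k = s * ∏ j, p j := hi <| by
    rw [map_mul, ← sum_mul_map_prod i ha, ← mul_assoc, h, map_mul]
  have hunit : IsUnit (φ (∏ j, p j)) := by
    rw [map_prod]
    exact IsUnit.prod_univ_iff.2 hp
  rw [← hunit.mul_left_inj, mul_assoc, sum_mul_map_prod φ hb, ← map_mul, hr, map_mul]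

section DualNumbers

variable {R : Type*} [CommRing R]

lemma fst_aeval_one_sub_eps (P : R[X]) :
    (Polynomial.aeval (1 - DualNumber.eps : R[ε]) P).fst = P.eval 1 := by
  change TrivSqZeroExt.fstHom R R R _ = _
  rw [← Polynomial.aeval_algHom_apply, ← Polynomial.coe_aeval_eq_eval]
  simp

lemma eps_mul_eq_fst_smul (x : R[ε]) : DualNumber.eps * x = x.fst • DualNumber.eps := by
  ext <;> simp

lemma prod_one_add_smul_eps {ι : Type*} (s : Finset ι) (a : ι → R) :
    ∏ i ∈ s, (1 + a i • DualNumber.eps : R[ε]) = 1 + (∑ i ∈ s, a i) • DualNumber.eps := by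
  classical
  induction s using Finset.induction_on with
  | empty => simp
  | insert i s hi ih =>
    rw [Finset.prod_insert hi, Finset.sum_insert hi, ih]
    ext <;> simp [add_comm]

lemma one_sub_eps_pow (k : ℕ) :
    (1 - DualNumber.eps : R[ε]) ^ k = 1 - (k : R) • DualNumber.eps := by
  induction k with
  | zero => simp
  | succ k ih =>
    rw [pow_succ, ih]
    ext <;> simp [add_comm]

end DualNumbers

variable {K : Type*} [Field K]

lemma aeval_geom_sum [CharZero K] (e : ℕ) :
    Polynomial.aeval (1 - DualNumber.eps : K[ε])
        (∑ k ∈ Finset.range (e + 1), Polynomial.X ^ k : K[X]) =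
      (e + 1 : K) • (1 + (-(e : K) / 2) • DualNumber.eps) := by
  have hsum : ∑ k ∈ Finset.range (e + 1), (k : K) = (e + 1) * e / 2 := by
    rw [eq_div_iff two_ne_zero]
    have h := congrArg (Nat.cast : ℕ → K) (Finset.sum_range_id_mul_two (e + 1))
    simpa only [Nat.add_sub_cancel, Nat.cast_mul, Nat.cast_sum, Nat.cast_add, Nat.cast_one,
      Nat.cast_ofNat] using h
  simp only [map_sum, map_pow, Polynomial.aeval_X, one_sub_eps_pow]
  rw [Finset.sum_sub_distrib, ← Finset.sum_smul, hsum]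
  ext
  · simp
  · simp only [Finset.sum_const, Finset.card_range, nsmul_eq_mul, Nat.cast_add, Nat.cast_one,
      mul_one, TrivSqZeroExt.snd_sub, TrivSqZeroExt.snd_add, TrivSqZeroExt.snd_natCast,
      TrivSqZeroExt.snd_one, add_zero, TrivSqZeroExt.snd_smul, DualNumber.snd_eps, smul_eq_mul,
      zero_sub, smul_add, mul_zero, zero_add]
    ring

variable {σ : Type*} [Fintype σ] [DecidableEq σ]

open scoped Classical in
/-- The reduction modulo `(1 - t)²` of `(1 - t) ^ ℓ * traceSeries g` at `t = 1 - ε`, for `g` of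
finite order. -/
noncomputable def traceSeriesAtOne (g : Matrix.GeneralLinearGroup σ K) : K[ε] :=
  (if g = 1 then 1 else 0) + if IsReflection g then (1 - g.1.det)⁻¹ • DualNumber.eps else 0

lemma exists_mul_traceSeriesAtOne_eq {g : Matrix.GeneralLinearGroup σ K} {m : ℕ} (hm : (m : K) ≠ 0)
    (hg : g ^ m = 1) :
    ∃ P : K[X], (1 - PowerSeries.X) ^ Fintype.card σ * traceSeries g.1 * (P : K⟦X⟧) =
        (1 - PowerSeries.X) ^ (g.1 - 1).rank ∧
      traceSeriesAtOne g * Polynomial.aeval (1 - DualNumber.eps : K[ε]) P =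
        DualNumber.eps ^ (g.1 - 1).rank ∧
      IsUnit (Polynomial.aeval (1 - DualNumber.eps : K[ε]) P) := by
  obtain ⟨P, hP, hP1, hP_one, hP_refl⟩ := exists_traceSeries_mul_eq (g := g.1) hm
    (by rw [← Units.val_pow_eq_pow_val, hg, Units.val_one])
  refine ⟨P, hP, ?_, ?_⟩
  · by_cases h1 : g = 1
    · have hrank : (g.1 - 1).rank = 0 := by
        rw [h1, Units.val_one, sub_self, Matrix.rank_zero]
      have hr : ¬ IsReflection g := h1 ▸ not_isReflection_one
      rw [traceSeriesAtOne, if_pos h1, if_neg hr, add_zero, hP_one hrank, hrank, map_one, mul_one,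
        pow_zero]
    by_cases hr : IsReflection g
    · have hdet : 1 - g.1.det ≠ 0 := hP_refl hr ▸ hP1
      rw [traceSeriesAtOne, if_neg h1, if_pos hr, zero_add, smul_mul_assoc, eps_mul_eq_fst_smul,
        fst_aeval_one_sub_eps, hP_refl hr, smul_smul, inv_mul_cancel₀ hdet, one_smul, hr, pow_one]
    · rw [traceSeriesAtOne, if_neg h1, if_neg hr, add_zero, zero_mul,
        pow_eq_zero_of_le (two_le_rank_sub_one h1 hr) DualNumber.eps_pow_two]
  · rw [TrivSqZeroExt.isUnit_iff_isUnit_fst, fst_aeval_one_sub_eps]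
    exact hP1.isUnit

lemma prod_geom_sum_mul_sum_traceSeries [CharZero K] (W : Subgroup (Matrix.GeneralLinearGroup σ K))
    [Fintype W] {f : σ → MvPolynomial σ K} {e : σ → ℕ} (hhom : ∀ i, (f i).IsHomogeneous (e i + 1))
    (hindep : AlgebraicIndependent K f)
    (hadj : Algebra.adjoin K (Set.range f) = invariantSubalgebra W) :
    (∏ i, ∑ k ∈ Finset.range (e i + 1), PowerSeries.X ^ k) *
      ∑ g : W, (1 - PowerSeries.X) ^ Fintype.card σ * traceSeries g.1.1 = (Nat.card W : K⟦X⟧) := by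
  have hgeom : (1 - PowerSeries.X) ^ Fintype.card σ *
      ∏ i, ∑ k ∈ Finset.range (e i + 1), PowerSeries.X ^ k =
        ∏ i, (1 - PowerSeries.X ^ (e i + 1) : K⟦X⟧) := by
    simp only [← mul_neg_geom_sum, Finset.prod_mul_distrib, Finset.prod_const, Finset.card_univ]
  have hhilbert := hilbertSeries_adjoin_mul (fun i => (e i).succ_ne_zero) hhom hindep
  rw [← Finset.mul_sum, sum_traceSeries_eq_card_mul_hilbertSeries, ← mul_assoc, mul_comm (∏ _, _),
    hgeom, ← hadj]
  linear_combination (Nat.card W : K⟦X⟧) * hhilbert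

lemma prod_mul_sum_traceSeriesAtOne [CharZero K] (W : Subgroup (Matrix.GeneralLinearGroup σ K))
    [Fintype W] {f : σ → MvPolynomial σ K} {e : σ → ℕ} (hhom : ∀ i, (f i).IsHomogeneous (e i + 1))
    (hindep : AlgebraicIndependent K f)
    (hadj : Algebra.adjoin K (Set.range f) = invariantSubalgebra W) :
    (∏ i, (e i + 1 : K) • (1 + (-(e i : K) / 2) • DualNumber.eps)) *
      ∑ g : W, traceSeriesAtOne g.1 = (Nat.card W : K[ε]) := by
  have hpow (g : W) : g.1 ^ Nat.card W = 1 := by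
    rw [← Subgroup.coe_pow, pow_card_eq_one', Subgroup.coe_one]
  choose P hP hP1 hPunit using fun g : W =>
    exists_mul_traceSeriesAtOne_eq (K := K) (Nat.cast_ne_zero.2 Nat.card_pos.ne') (hpow g)
  have h := map_mul_sum_eq_of_mul_map_eq (i := Polynomial.coeToPowerSeries.ringHom (R := K))
    (a := fun g : W => (1 - PowerSeries.X) ^ Fintype.card σ * traceSeries g.1.1)
    (b := fun g => traceSeriesAtOne g.1) (p := P)
    (q := fun g => (1 - Polynomial.X) ^ (g.1.1 - 1).rank)
    (r := ∏ i, ∑ k ∈ Finset.range (e i + 1), Polynomial.X ^ k) (s := (Nat.card W : K[X]))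
    (Polynomial.coe_injective K) (Polynomial.aeval (1 - DualNumber.eps : K[ε])).toRingHom
    (by simpa using hP) (by simpa using hP1) (by simpa using hPunit)
    (by simpa using prod_geom_sum_mul_sum_traceSeries W hhom hindep hadj)
  simp only [← aeval_geom_sum]
  simpa using h

open scoped Classical in
lemma sum_traceSeriesAtOne (W : Subgroup (Matrix.GeneralLinearGroup σ K)) [Fintype W] :
    ∑ g : W, traceSeriesAtOne g.1 =
      1 + (∑ g : W with IsReflection g.1, (1 - g.1.1.det)⁻¹) • DualNumber.eps := by
  simp only [traceSeriesAtOne, Finset.sum_add_distrib, OneMemClass.coe_eq_one, Finset.sum_ite_eq',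
    Finset.mem_univ, if_true, ← Finset.sum_filter, Finset.sum_smul]

open scoped Classical in
lemma sum_inv_one_sub_det [CharZero K] (W : Subgroup (Matrix.GeneralLinearGroup σ K))
    [Fintype W] {f : σ → MvPolynomial σ K} {e : σ → ℕ} (hhom : ∀ i, (f i).IsHomogeneous (e i + 1))
    (hindep : AlgebraicIndependent K f)
    (hadj : Algebra.adjoin K (Set.range f) = invariantSubalgebra W) :
    ∑ g : W with IsReflection g.1, (1 - g.1.1.det)⁻¹ = (∑ i, (e i : K)) / 2 := by
  have hN : ∏ i, (e i + 1 : K) ≠ 0 :=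
    Finset.prod_ne_zero_iff.2 fun i _ => Nat.cast_add_one_ne_zero (e i)
  have h := congrArg TrivSqZeroExt.snd (prod_mul_sum_traceSeriesAtOne W hhom hindep hadj)
  rw [sum_traceSeriesAtOne, Finset.prod_smul, prod_one_add_smul_eps] at h
  have hsnd : (∏ i, (e i + 1 : K)) * (∑ g : W with IsReflection g.1, (1 - g.1.1.det)⁻¹ -
      (∑ i, (e i : K)) / 2) = 0 := by
    simpa [← Finset.sum_div, neg_div, mul_sub, ← sub_eq_add_neg] using h
  exact sub_eq_zero.1 ((mul_eq_zero.1 hsnd).resolve_left hN)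

end Expansion

section Counting

variable {σ K : Type*} [Fintype σ] [DecidableEq σ] [Field K]

lemma inv_one_sub_add_inv_one_sub_inv {x : K} (h0 : x ≠ 0) (h1 : x ≠ 1) :
    (1 - x)⁻¹ + (1 - x⁻¹)⁻¹ = 1 := by
  have h2 : 1 - x ≠ 0 := sub_ne_zero.2 h1.symm
  have h3 : 1 - x⁻¹ = -(1 - x) / x := by
    field_simp
    ring
  rw [h3, inv_div]
  field_simp
  ring

open scoped Classical in
lemma two_mul_sum_inv_one_sub_det [CharZero K] (W : Subgroup (Matrix.GeneralLinearGroup σ K))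
    [Fintype W] :
    2 * ∑ g : W with IsReflection g.1, (1 - g.1.1.det)⁻¹ =
      (Finset.card {g : W | IsReflection g.1} : K) := by
  have hinv : ∑ g : W with IsReflection g.1, (1 - g.1.1.det)⁻¹ =
      ∑ g : W with IsReflection g.1, (1 - g.1.1.det⁻¹)⁻¹ := by
    refine Finset.sum_equiv (Equiv.inv W) (fun g => ?_) fun g _ => ?_
    · simp [isReflection_inv_iff]
    · simp
  rw [two_mul]
  nth_rewrite 2 [hinv]
  rw [← Finset.sum_add_distrib, Finset.card_eq_sum_ones, Nat.cast_sum]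
  refine Finset.sum_congr rfl fun g hg => ?_
  have hgm : g.1 ^ Nat.card W = 1 := by
    rw [← Subgroup.coe_pow, pow_card_eq_one', Subgroup.coe_one]
  rw [Nat.cast_one]
  exact inv_one_sub_add_inv_one_sub_inv g.1.det_ne_zero
    ((Finset.mem_filter.1 hg).2.det_ne_one (Nat.cast_ne_zero.2 Nat.card_pos.ne') hgm)

theorem stmt3_general [CharZero K] (W : Subgroup (Matrix.GeneralLinearGroup σ K)) [Finite W]
    (f : σ → MvPolynomial σ K) (e : σ → ℕ) (hhom : ∀ i, (f i).IsHomogeneous (e i + 1))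
    (hindep : AlgebraicIndependent K f)
    (hadj : Algebra.adjoin K (Set.range f) = invariantSubalgebra W) :
    Nat.card {g : W // IsReflection (g : Matrix.GeneralLinearGroup σ K)} = ∑ i, e i := by
  classical
  have := Fintype.ofFinite W
  have hcount := two_mul_sum_inv_one_sub_det W
  rw [sum_inv_one_sub_det W hhom hindep hadj, mul_div_cancel₀ _ two_ne_zero] at hcount
  rw [Nat.card_eq_fintype_card, Fintype.card_subtype]
  exact_mod_cast hcount.symm

end Counting

/-- For a finite complex reflection group `W ⊆ GL_ℓ(ℂ)` with exponents
`e₁,...,e_ℓ` (so the invariant ring is a polynomial ring on algebraically independent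
homogeneous generators of degrees `eᵢ + 1`), the number of reflections in `W` equals
`e₁ + ⋯ + e_ℓ`. -/
theorem stmt3 {ℓ : ℕ} (W : Subgroup (Matrix.GeneralLinearGroup (Fin ℓ) ℂ)) [Fintype W]
    (hgen : Subgroup.closure {g | g ∈ W ∧ IsReflection3 g} = W)
    (f : Fin ℓ → MvPolynomial (Fin ℓ) ℂ) (e : Fin ℓ → ℕ)
    (hhom : ∀ i, (f i).IsHomogeneous (e i + 1))
    (hindep : AlgebraicIndependent ℂ f)
    (hadj : Algebra.adjoin ℂ (Set.range f) = invariants3 W) :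
    Nat.card {g : W // IsReflection3 (g : Matrix.GeneralLinearGroup (Fin ℓ) ℂ)} = ∑ i, e i := by
  simpa only [isReflection3_iff] using stmt3_general W f e hhom hindep hadj
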